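/- Let S and T be finite nonempty sets and let ψ₁,…,ψ_n : S × T → ℂ. For ψ : S × T → ℂ define γ₂(ψ) as the infimum of sup_{s∈S} ‖x(s)‖ · sup_{t∈T} ‖y(t)‖ over all d ∈ ℕ and maps x : S → ℂ^d, y : T → ℂ^d with ψ(s,t) = ⟪x(s), y(t)⟫ for all (s,t). Let μ be the product over Fin n of the normalized Haar probability measure on the circle 𝕋 = {z ∈ ℂ : |z|=1}. Assume ∫_{𝕋^n} γ₂(Σ_{k=1}^n z_k ψ_k) dμ(z) < 1. Then there is a decomposition ψ_k = A_k + B_k (k = 1,…,n) of functions on S × T such that: (a) there exist d ∈ ℕ and maps α_k : S → ℂ^d (k = 1,…,n) and β : T → ℂ^d with A_k(s,t) = ⟪α_k(s), β(t)⟫ for all k, s, t, sup_{s∈S} Σ_{k=1}^n ‖α_k(s)‖² ≤ 1 and sup_{t∈T} ‖β(t)‖ ≤ 1; and (b) there exist d′ ∈ ℕ and maps γ : S → ℂ^{d′} and δ_k : T → ℂ^{d′} (k = 1,…,n) with B_k(s,t) = ⟪γ(s), δ_k(t)⟫ for all k, s, t, sup_{s∈S} ‖γ(s)‖ ≤ 1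 and sup_{t∈T} Σ_{k=1}^n ‖δ_k(t)‖² ≤ 1. -/

import Mathlib

open scoped ENNReal NNReal
open MeasureTheory ContinuousLinearMap

noncomputable section

/-- `ψ : S × T → ℂ` is a Schur multiplier of norm at most `C`: for every bounded operator
`A : ℓ²(S) → ℓ²(T)` there is a bounded `B : ℓ²(S) → ℓ²(T)` whose matrix entries are
`ψ(s,t) · A(s,t)` and with `‖B‖ ≤ C‖A‖`. -/
def IsSchurMultiplier {S T : Type*} (ψ : S × T → ℂ) (C : ℝ) : Prop :=
  letI := Classical.decEq S
  letI := Classical.decEq T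
  ∀ A : lp (fun _ : S => ℂ) 2 →L[ℂ] lp (fun _ : T => ℂ) 2,
    ∃ B : lp (fun _ : S => ℂ) 2 →L[ℂ] lp (fun _ : T => ℂ) 2,
      (∀ (s : S) (t : T),
        (inner (𝕜 := ℂ) (lp.single 2 t 1) (B (lp.single 2 s 1)))
          = ψ (s, t) * inner (𝕜 := ℂ) (lp.single 2 t 1) (A (lp.single 2 s 1))) ∧
      ‖B‖ ≤ C * ‖A‖

/-- The `γ₂` norm of a kernel `ψ : S × T → ℂ`: the infimum of
`sup_s ‖x(s)‖ · sup_t ‖y(t)‖` over all finite-dimensional Hilbert space factorizations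
`ψ(s,t) = ⟪x(s), y(t)⟫`. -/
def gamma2 {S T : Type*} (ψ : S × T → ℂ) : ℝ :=
  sInf { c : ℝ |
    ∃ (d : ℕ) (x : S → EuclideanSpace ℂ (Fin d)) (y : T → EuclideanSpace ℂ (Fin d)),
      (∀ s t, ψ (s, t) = inner (𝕜 := ℂ) (x s) (y t)) ∧
      c = (⨆ s, ‖x s‖) * (⨆ t, ‖y t‖) }

/-!
For suitable unimodular scalars `ωₖ`, the average of `γ₂(∑ₖ ωₖ zₖ ψₖ)` over the finite group of
points `zₖ = χ(r 2^(k+1))`, `r ∈ ZMod (2 * N)` and `χ` the standard character, is at most the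
integral. The direct sum over `r` of factorizations of these kernels, twisted by `χ`, gives vectors
`X i s`, `Y j t` with `⟪X i s, Y j t⟫` proportional to `ωₖ ψₖ(s, t)` if `i = j + 2^(k+1)`, and zero
if `i - j` is not of this form. This Gram matrix is strictly triangular, so `⟪X i s, Y j t⟫` is the
sum over `j ≤ l < i` of the inner products of the `l`-th martingale differences along the filtration
spanned by the `X i`. For `i = j + 2^(k+1)` cut this interval at its midpoint. On the left half
`i - l - 1` lies in `[2^k, 2^(k+1))`, so that `i` and `l` determine `k`: the vectors used on the
`S` side for different `k` are disjoint blocks of one square-summable family, which gives a column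
factorization. On the right half `l - j` lies in `[2^k, 2^(k+1))`, and the roles of `S` and `T` are
exchanged.
-/

open Finset Function
open scoped ComplexConjugate

section Filtration

variable {𝕜 H : Type*} [RCLike 𝕜] [NormedAddCommGroup H] [InnerProductSpace 𝕜 H]

/-- The `l`-th martingale difference of a filtration `E` of a Hilbert space: for monotone `E`, the
orthogonal projection onto `E (l + 1) ⊖ E l`. -/
def projDiff (E : ℕ → Submodule 𝕜 H) [∀ l, (E l).HasOrthogonalProjection] (l : ℕ) : H →L[𝕜] H :=
  (E (l + 1)).starProjection - (E l).starProjection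

variable {E : ℕ → Submodule 𝕜 H} [∀ l, (E l).HasOrthogonalProjection]

theorem inner_projDiff_projDiff (hE : Monotone E) (l : ℕ) (u v : H) :
    inner 𝕜 (projDiff E l u) (projDiff E l v) =
      inner 𝕜 ((E (l + 1)).starProjection u) v - inner 𝕜 ((E l).starProjection u) v := by
  have hself : ∀ i, (E i).starProjection ((E i).starProjection u) = (E i).starProjection u :=
    fun i => congrArg (· u) (E i).isIdempotentElem_starProjection
  have hdown : (E l).starProjection ((E (l + 1)).starProjection u) = (E l).starProjection u :=
    congrArg (· u) (Submodule.starProjection_comp_starProjection_of_le (hE l.le_succ))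
  have hup : (E (l + 1)).starProjection ((E l).starProjection u) = (E l).starProjection u :=
    Submodule.starProjection_eq_self_iff.2
      (hE l.le_succ (Submodule.starProjection_apply_mem _ _))
  simp only [projDiff, _root_.sub_apply, inner_sub_right,
    ← Submodule.inner_starProjection_left_eq_right, map_sub, hself, hdown, hup, sub_self,
    inner_zero_left, sub_zero, inner_sub_left]

theorem sum_Ico_inner_projDiff (hE : Monotone E) {a b : ℕ} (hab : a ≤ b) (u v : H) :
    ∑ l ∈ Ico a b, inner 𝕜 (projDiff E l u) (projDiff E l v) =
      inner 𝕜 ((E b).starProjection u) v - inner 𝕜 ((E a).starProjection u) v := by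
  simp only [inner_projDiff_projDiff hE]
  exact sum_Ico_sub (fun l => inner 𝕜 ((E l).starProjection u) v) hab

theorem sum_norm_projDiff_sq_le (hE : Monotone E) (N : ℕ) (v : H) :
    ∑ l : Fin N, ‖projDiff E l v‖ ^ 2 ≤ ‖v‖ ^ 2 := by
  have hproj : ∀ l, RCLike.re (inner 𝕜 ((E l).starProjection v) v) =
      ‖(E l).starProjection v‖ ^ 2 := fun l =>
    Submodule.re_inner_starProjection_eq_normSq _ _
  have htel : ∑ l : Fin N, ‖projDiff E l v‖ ^ 2 =
      ‖(E N).starProjection v‖ ^ 2 - ‖(E 0).starProjection v‖ ^ 2 := by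
    have h := congrArg RCLike.re (sum_Ico_inner_projDiff hE N.zero_le v v)
    simpa only [map_sum, inner_self_eq_norm_sq, map_sub, hproj, Nat.Ico_zero_eq_range,
      sum_range] using h
  have hcontr : ‖(E N).starProjection v‖ ^ 2 ≤ ‖v‖ ^ 2 := by
    gcongr
    exact (E N).norm_starProjection_apply_le v
  linarith [sq_nonneg ‖(E 0).starProjection v‖]

theorem sum_norm_projDiff_sq_le_mul (hE : Monotone E) {N M : ℕ} {v : Fin M → H} {C : ℝ}
    (hv : ∀ i, ‖v i‖ ^ 2 ≤ C) :
    ∑ q : Fin M × Fin N, ‖projDiff E q.2 (v q.1)‖ ^ 2 ≤ M * C := by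
  rw [Fintype.sum_prod_type]
  calc ∑ i, ∑ l : Fin N, ‖projDiff E l (v i)‖ ^ 2 ≤ ∑ _i : Fin M, C :=
        sum_le_sum fun i _ => (sum_norm_projDiff_sq_le hE N (v i)).trans (hv i)
    _ = M * C := by simp

theorem inner_eq_sum_Ico_projDiff (hE : Monotone E) {i j : ℕ} (hji : j ≤ i) {u v : H}
    (hu : u ∈ E i) (hv : v ∈ (E j)ᗮ) :
    inner 𝕜 u v = ∑ l ∈ Ico j i, inner 𝕜 (projDiff E l u) (projDiff E l v) := by
  rw [sum_Ico_inner_projDiff hE hji, Submodule.starProjection_eq_self_iff.2 hu,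
    hv _ (Submodule.starProjection_apply_mem _ _), sub_zero]

end Filtration

section Factorization

variable {ι S T : Type*}

/-- `ψ(s,t) = ⟪x(s), y(t)⟫` with `‖x(s)‖² ≤ c` and `‖y(t)‖² ≤ c`. Bounding both factors by the same
constant is what makes factorizations stable under orthogonal direct sums. -/
def HasFactorization (ψ : S × T → ℂ) (c : ℝ) : Prop :=
  ∃ (d : ℕ) (x : S → EuclideanSpace ℂ (Fin d)) (y : T → EuclideanSpace ℂ (Fin d)),
    (∀ s t, ψ (s, t) = inner ℂ (x s) (y t)) ∧ (∀ s, ‖x s‖ ^ 2 ≤ c) ∧ ∀ t, ‖y t‖ ^ 2 ≤ c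

/-- `A_k(s,t) = ⟪α_k(s), β(t)⟫` with `∑ₖ ‖α_k(s)‖² ≤ C` and `‖β(t)‖² ≤ C`, as in part (a) of the
decomposition. -/
def HasColumnFactorization [Fintype ι] (A : ι → S × T → ℂ) (C : ℝ) : Prop :=
  ∃ (d : ℕ) (α : ι → S → EuclideanSpace ℂ (Fin d)) (β : T → EuclideanSpace ℂ (Fin d)),
    (∀ k s t, A k (s, t) = inner ℂ (α k s) (β t)) ∧
      (∀ s, ∑ k, ‖α k s‖ ^ 2 ≤ C) ∧ ∀ t, ‖β t‖ ^ 2 ≤ C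

/-- `B_k(s,t) = ⟪γ(s), δ_k(t)⟫` with `‖γ(s)‖² ≤ C` and `∑ₖ ‖δ_k(t)‖² ≤ C`, as in part (b) of the
decomposition, encoded as a column factorization of the adjoint kernels on `T × S`. -/
def HasRowFactorization [Fintype ι] (B : ι → S × T → ℂ) (C : ℝ) : Prop :=
  HasColumnFactorization (fun k p => conj (B k p.swap)) C

/-- The family `ψ` is the sum of a column-factorizable and a row-factorizable family, with the same
bound `C` on all squared norms. -/
def HasColumnRowDecomposition [Fintype ι] (ψ : ι → S × T → ℂ) (C : ℝ) : Prop :=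
  ∃ A B : ι → S × T → ℂ, (∀ k p, ψ k p = A k p + B k p) ∧
    HasColumnFactorization A C ∧ HasRowFactorization B C

theorem exists_eq_inner [Finite S] (ψ : S × T → ℂ) :
    ∃ (d : ℕ) (x : S → EuclideanSpace ℂ (Fin d)) (y : T → EuclideanSpace ℂ (Fin d)),
      ∀ s t, ψ (s, t) = inner ℂ (x s) (y t) := by
  classical
  have := Fintype.ofFinite S
  let e := (stdOrthonormalBasis ℂ (EuclideanSpace ℂ S)).repr
  refine ⟨_, fun s => e (EuclideanSpace.single s 1),
    fun t => e (WithLp.toLp 2 fun s => ψ (s, t)), fun s t => ?_⟩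
  simp [e.inner_map_map, EuclideanSpace.inner_single_left]

namespace HasFactorization

theorem of_norm_le {d : ℕ} {ψ : S × T → ℂ} {x : S → EuclideanSpace ℂ (Fin d)}
    {y : T → EuclideanSpace ℂ (Fin d)} {a b c : ℝ} (hψ : ∀ s t, ψ (s, t) = inner ℂ (x s) (y t))
    (hx : ∀ s, ‖x s‖ ≤ a) (hy : ∀ t, ‖y t‖ ≤ b) (ha : 0 ≤ a) (hc : 0 < c) (habc : a * b ≤ c) :
    HasFactorization ψ c := by
  rcases ha.eq_or_lt with rfl | ha
  · have hx0 : ∀ s, x s = 0 := fun s => norm_le_zero_iff.1 (hx s)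
    exact ⟨d, 0, 0, by simp [hψ, hx0], by simp [hc.le], by simp [hc.le]⟩
  have : 0 < √c := Real.sqrt_pos.2 hc
  have hrr : √c ^ 2 = c := Real.sq_sqrt hc.le
  refine ⟨d, fun s => ((√c / a : ℝ) : ℂ) • x s, fun t => ((a / √c : ℝ) : ℂ) • y t,
    fun s t => ?_, fun s => ?_, fun t => ?_⟩
  · have hone : √c / a * (a / √c) = 1 := by field_simp
    rw [inner_smul_left, inner_smul_right, Complex.conj_ofReal, ← mul_assoc,
      ← Complex.ofReal_mul, hone, Complex.ofReal_one, one_mul, hψ]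
  · rw [norm_smul, Complex.norm_of_nonneg (by positivity)]
    calc (√c / a * ‖x s‖) ^ 2 ≤ (√c / a * a) ^ 2 := by gcongr; exact hx s
      _ = c := by rw [div_mul_cancel₀ _ ha.ne', hrr]
  · rw [norm_smul, Complex.norm_of_nonneg (by positivity)]
    calc (a / √c * ‖y t‖) ^ 2 ≤ (c / √c) ^ 2 := by
          rw [div_mul_eq_mul_div]
          gcongr
          exact (mul_le_mul_of_nonneg_left (hy t) ha.le).trans habc
      _ = c := by rw [div_pow, hrr, sq, mul_div_cancel_right₀ _ hc.ne']

theorem exists_directSum {κ : Type*} [Fintype κ] {f : κ → S × T → ℂ} {w : κ → ℝ}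
    (h : ∀ r, HasFactorization (f r) (w r)) :
    ∃ (d : ℕ) (X : (κ → ℂ) → S → EuclideanSpace ℂ (Fin d))
      (Y : (κ → ℂ) → T → EuclideanSpace ℂ (Fin d)),
      (∀ u v s t, inner ℂ (X u s) (Y v t) = ∑ r, conj (u r) * v r * f r (s, t)) ∧
        (∀ u s, ‖X u s‖ ^ 2 ≤ ∑ r, ‖u r‖ ^ 2 * w r) ∧
        ∀ v t, ‖Y v t‖ ^ 2 ≤ ∑ r, ‖v r‖ ^ 2 * w r := by
  choose d x y hf hx hy using h
  let e := (stdOrthonormalBasis ℂ (PiLp 2 fun r => EuclideanSpace ℂ (Fin (d r)))).repr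
  refine ⟨_, fun u s => e (WithLp.toLp 2 fun r => u r • x r s),
    fun v t => e (WithLp.toLp 2 fun r => v r • y r t), fun u v s t => ?_, fun u s => ?_,
    fun v t => ?_⟩
  · simp only [e.inner_map_map, PiLp.inner_apply, inner_smul_left, inner_smul_right, hf]
    exact sum_congr rfl fun r _ => by ring
  · rw [e.norm_map, PiLp.norm_sq_eq_of_L2]
    simp only [norm_smul, mul_pow]
    gcongr with r
    exact hx r s
  · rw [e.norm_map, PiLp.norm_sq_eq_of_L2]
    simp only [norm_smul, mul_pow]
    gcongr with r
    exact hy r t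

theorem convexCombination {f g : S × T → ℂ} {v w a b : ℝ} (hf : HasFactorization f v)
    (hg : HasFactorization g w) (ha : 0 ≤ a) (hb : 0 ≤ b) :
    HasFactorization (a • f + b • g) (a * v + b * w) := by
  obtain ⟨d, X, Y, hXY, hX, hY⟩ :=
    exists_directSum (f := ![f, g]) (w := ![v, w]) (Fin.forall_fin_two.2 ⟨hf, hg⟩)
  let u : Fin 2 → ℂ := ![(√a : ℝ), (√b : ℝ)]
  have hu : ∑ r, ‖u r‖ ^ 2 * ![v, w] r = a * v + b * w := by
    simp [u, Fin.sum_univ_two, Real.sq_sqrt, ha, hb]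
  refine ⟨d, X u, Y u, fun s t => ?_, fun s => (hX u s).trans_eq hu, fun t => (hY u t).trans_eq hu⟩
  simp [hXY, u, Fin.sum_univ_two, ← Complex.ofReal_mul, Real.mul_self_sqrt, ha, hb]

end HasFactorization

namespace HasColumnFactorization

variable [Fintype ι]

theorem mul {A : ι → S × T → ℂ} {C r : ℝ} (h : HasColumnFactorization A C) {a : ι → ℂ}
    (ha : ∀ k, ‖a k‖ ≤ r) (hr : 0 < r) :
    HasColumnFactorization (fun k p => a k * A k p) (r * C) := by
  obtain ⟨d, α, β, hA, hα, hβ⟩ := h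
  have hsqrt : 0 < √r := Real.sqrt_pos.2 hr
  have hsq : √r ^ 2 = r := Real.sq_sqrt hr.le
  refine ⟨d, fun k s => (conj (a k) / (√r : ℂ)) • α k s, fun t => (√r : ℂ) • β t,
    fun k s t => ?_, fun s => ?_, fun t => ?_⟩
  · have : (√r : ℂ) ≠ 0 := by exact_mod_cast hsqrt.ne'
    simp only [hA, inner_smul_left, inner_smul_right, map_div₀, Complex.conj_conj,
      Complex.conj_ofReal]
    field_simp
  · calc ∑ k, ‖(conj (a k) / (√r : ℂ)) • α k s‖ ^ 2
        = ∑ k, ‖a k‖ ^ 2 / r * ‖α k s‖ ^ 2 := by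
          simp [norm_smul, mul_pow, div_pow, hsq]
      _ ≤ ∑ k, r ^ 2 / r * ‖α k s‖ ^ 2 := by
          gcongr with k
          exact ha k
      _ = r * ∑ k, ‖α k s‖ ^ 2 := by rw [mul_sum, sq, mul_div_cancel_right₀ _ hr.ne']
      _ ≤ r * C := by
          gcongr
          exact hα s
  · rw [norm_smul, mul_pow, Complex.norm_of_nonneg hsqrt.le, hsq]
    gcongr
    exact hβ t

variable {H I J : Type*} [NormedAddCommGroup H] [InnerProductSpace ℂ H] [FiniteDimensional ℂ H]
  [Fintype I] [Fintype J] {R : ι → Type*} [∀ k, Fintype (R k)]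

theorem sum_inner {x : I → S → H} {y : J → T → H} {C : ℝ} (hx : ∀ s, ∑ i, ‖x i s‖ ^ 2 ≤ C)
    (hy : ∀ t, ∑ j, ‖y j t‖ ^ 2 ≤ C) {a : ∀ k, R k → I} {b : ∀ k, R k → J}
    (ha : Injective fun r : Σ k, R k => a r.1 r.2) (hb : ∀ k, Injective (b k)) :
    HasColumnFactorization (fun k p => ∑ r, inner ℂ (x (a k r) p.1) (y (b k r) p.2)) C := by
  let e := (stdOrthonormalBasis ℂ (PiLp 2 fun _ : J => H)).repr
  let α (k : ι) (s : S) : J → H := extend (b k) (fun r => x (a k r) s) 0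
  have hα : ∀ k s r, α k s (b k r) = x (a k r) s := fun k s r => (hb k).extend_apply _ _ _
  have hα0 : ∀ k s, ∀ j ∉ Set.range (b k), α k s j = 0 := fun k s j hj =>
    extend_apply' _ _ _ hj
  refine ⟨_, fun k s => e (WithLp.toLp 2 (α k s)), fun t => e (WithLp.toLp 2 fun j => y j t),
    fun k s t => ?_, fun s => ?_, fun t => ?_⟩
  · simp only [e.inner_map_map, PiLp.inner_apply]
    exact Fintype.sum_of_injective (b k) (hb k) _ _ (fun j hj => by simp [hα0 k s j hj])
      fun r => by rw [hα]
  · calc ∑ k, ‖e (WithLp.toLp 2 (α k s))‖ ^ 2 = ∑ k, ∑ r, ‖x (a k r) s‖ ^ 2 := by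
          refine sum_congr rfl fun k _ => ?_
          rw [e.norm_map, PiLp.norm_sq_eq_of_L2]
          exact (Fintype.sum_of_injective (b k) (hb k) _ _ (fun j hj => by simp [hα0 k s j hj])
            fun r => by simp [hα]).symm
      _ = ∑ r : Σ k, R k, ‖x (a r.1 r.2) s‖ ^ 2 := (Fintype.sum_sigma' _).symm
      _ ≤ ∑ i, ‖x i s‖ ^ 2 := by
          classical
          rw [← sum_image (f := fun i => ‖x i s‖ ^ 2) ha.injOn]
          exact sum_le_sum_of_subset_of_nonneg (subset_univ _) fun _ _ _ => by positivity
      _ ≤ C := hx s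
  · simpa only [e.norm_map, PiLp.norm_sq_eq_of_L2] using hy t

end HasColumnFactorization

theorem HasRowFactorization.sum_inner [Fintype ι] {H I J : Type*} [NormedAddCommGroup H]
    [InnerProductSpace ℂ H] [FiniteDimensional ℂ H] [Fintype I] [Fintype J] {R : ι → Type*}
    [∀ k, Fintype (R k)] {x : I → S → H} {y : J → T → H} {C : ℝ}
    (hx : ∀ s, ∑ i, ‖x i s‖ ^ 2 ≤ C) (hy : ∀ t, ∑ j, ‖y j t‖ ^ 2 ≤ C) {a : ∀ k, R k → I}
    {b : ∀ k, R k → J} (ha : ∀ k, Injective (a k))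
    (hb : Injective fun r : Σ k, R k => b r.1 r.2) :
    HasRowFactorization (fun k p => ∑ r, inner ℂ (x (a k r) p.1) (y (b k r) p.2)) C := by
  simpa only [HasRowFactorization, Prod.fst_swap, Prod.snd_swap, map_sum, inner_conj_symm] using
    HasColumnFactorization.sum_inner hy hx hb ha

theorem HasColumnRowDecomposition.mul [Fintype ι] {ψ : ι → S × T → ℂ} {C r : ℝ}
    (h : HasColumnRowDecomposition ψ C) {a : ι → ℂ} (ha : ∀ k, ‖a k‖ ≤ r) (hr : 0 < r) :
    HasColumnRowDecomposition (fun k p => a k * ψ k p) (r * C) := by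
  obtain ⟨A, B, hψ, hA, hB⟩ := h
  refine ⟨fun k p => a k * A k p, fun k p => a k * B k p, fun k p => by simp [hψ, mul_add],
    hA.mul ha hr, ?_⟩
  simpa only [HasRowFactorization, map_mul] using
    HasColumnFactorization.mul hB (a := fun k => conj (a k))
      (fun k => (RCLike.norm_conj (a k)).trans_le (ha k)) hr

end Factorization

section Gamma2

variable {S T : Type*}

theorem gamma2_nonneg (ψ : S × T → ℂ) : 0 ≤ gamma2 ψ := by
  refine Real.sInf_nonneg ?_
  rintro _ ⟨d, x, y, -, rfl⟩
  exact mul_nonneg (Real.iSup_nonneg fun s => norm_nonneg (x s))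
    (Real.iSup_nonneg fun t => norm_nonneg (y t))

theorem gamma2_le_iSup_mul_iSup {ψ : S × T → ℂ} {d : ℕ} {x : S → EuclideanSpace ℂ (Fin d)}
    {y : T → EuclideanSpace ℂ (Fin d)} (hψ : ∀ s t, ψ (s, t) = inner ℂ (x s) (y t)) :
    gamma2 ψ ≤ (⨆ s, ‖x s‖) * ⨆ t, ‖y t‖ := by
  refine csInf_le ⟨0, ?_⟩ ⟨d, x, y, hψ, rfl⟩
  rintro _ ⟨d, x, y, -, rfl⟩
  exact mul_nonneg (Real.iSup_nonneg fun s => norm_nonneg (x s))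
    (Real.iSup_nonneg fun t => norm_nonneg (y t))

theorem HasFactorization.gamma2_le {ψ : S × T → ℂ} {c : ℝ} (h : HasFactorization ψ c)
    (hc : 0 ≤ c) : gamma2 ψ ≤ c := by
  obtain ⟨d, x, y, hψ, hx, hy⟩ := h
  calc gamma2 ψ ≤ (⨆ s, ‖x s‖) * ⨆ t, ‖y t‖ := gamma2_le_iSup_mul_iSup hψ
    _ ≤ √c * √c := by
        gcongr
        · exact Real.iSup_nonneg fun _ => norm_nonneg _
        · exact Real.iSup_le (fun s => Real.le_sqrt_of_sq_le (hx s)) (Real.sqrt_nonneg c)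
        · exact Real.iSup_le (fun t => Real.le_sqrt_of_sq_le (hy t)) (Real.sqrt_nonneg c)
    _ = c := Real.mul_self_sqrt hc

variable [Finite S] [Finite T]

theorem hasFactorization_of_gamma2_lt {ψ : S × T → ℂ} {c : ℝ} (h : gamma2 ψ < c) :
    HasFactorization ψ c := by
  obtain ⟨d₀, x₀, y₀, h₀⟩ := exists_eq_inner ψ
  obtain ⟨_, ⟨d, x, y, hψ, rfl⟩, hlt⟩ :=
    exists_lt_of_csInf_lt (by exact ⟨_, d₀, x₀, y₀, h₀, rfl⟩) h
  exact .of_norm_le hψ (le_ciSup (Set.finite_range fun s => ‖x s‖).bddAbove)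
    (le_ciSup (Set.finite_range fun t => ‖y t‖).bddAbove)
    (Real.iSup_nonneg fun _ => norm_nonneg _) ((gamma2_nonneg ψ).trans_lt h) hlt.le

theorem convexOn_gamma2 : ConvexOn ℝ Set.univ (gamma2 : (S × T → ℂ) → ℝ) := by
  refine ⟨convex_univ, fun f _ g _ a b ha hb hab => le_of_forall_pos_le_add fun ε hε => ?_⟩
  have hf : HasFactorization f (gamma2 f + ε) := hasFactorization_of_gamma2_lt (by linarith)
  have hg : HasFactorization g (gamma2 g + ε) := hasFactorization_of_gamma2_lt (by linarith)
  have hf0 := gamma2_nonneg f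
  have hg0 := gamma2_nonneg g
  calc gamma2 (a • f + b • g) ≤ a * (gamma2 f + ε) + b * (gamma2 g + ε) :=
        (hf.convexCombination hg ha hb).gamma2_le (by positivity)
    _ = a • gamma2 f + b • gamma2 g + ε := by
        simp only [smul_eq_mul]
        linear_combination ε * hab

theorem continuous_gamma2 : Continuous (gamma2 : (S × T → ℂ) → ℝ) := by
  have := Fintype.ofFinite S
  have := Fintype.ofFinite T
  exact convexOn_gamma2.locallyLipschitz.continuous

end Gamma2

section Transference

variable {S T : Type*}

theorem eq_and_eq_of_two_pow_add_eq {k l a b : ℕ} (ha : a < 2 ^ k) (hb : b < 2 ^ l)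
    (h : 2 ^ k + a = 2 ^ l + b) : k = l ∧ a = b := by
  have hk : Nat.log 2 (2 ^ k + a) = k :=
    Nat.log_eq_of_pow_le_of_lt_pow (by omega) (by rw [pow_succ]; omega)
  have hl : Nat.log 2 (2 ^ l + b) = l :=
    Nat.log_eq_of_pow_le_of_lt_pow (by omega) (by rw [pow_succ]; omega)
  obtain rfl : k = l := by rw [← hk, h, hl]
  exact ⟨rfl, by omega⟩

theorem sum_Ico_two_pow_succ {M : Type*} [AddCommMonoid M] (f : ℕ → M) (j k : ℕ) :
    ∑ l ∈ Ico j (j + 2 ^ (k + 1)), f l =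
      ∑ a : Fin (2 ^ k), f (j + (2 ^ k - 1 - a)) + ∑ b : Fin (2 ^ k), f (j + (2 ^ k + b)) := by
  rw [sum_Ico_eq_sum_range, Nat.add_sub_cancel_left, pow_succ, mul_two, sum_range_add,
    ← sum_range_reflect, sum_range, sum_range]

/-- Indexes the pairs `(j, l)` where `j + 2 ^ (k + 1) < N` and `l` lies in one half of the interval
`[j, j + 2 ^ (k + 1))`: the first component is `j`, the second is the distance from `l` to the
midpoint of the interval, counted from `0` in either half. -/
abbrev DyadicIndex (N k : ℕ) : Type := Fin (N - 2 ^ (k + 1)) × Fin (2 ^ k)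

namespace DyadicIndex

variable {N n k : ℕ}

/-- The left endpoint `j` of the dyadic interval. -/
def lower (r : DyadicIndex N k) : Fin N := ⟨r.1, r.1.2.trans_le (Nat.sub_le _ _)⟩

/-- The right endpoint `j + 2 ^ (k + 1)` of the dyadic interval. -/
def upper (r : DyadicIndex N k) : Fin N := ⟨r.1 + 2 ^ (k + 1), by have := r.1.2; omega⟩

/-- The point of the left half of the dyadic interval at the given distance from the midpoint. -/
def left (r : DyadicIndex N k) : Fin N :=
  ⟨r.1 + (2 ^ k - 1 - r.2), by have := r.1.2; have := r.2.2; omega⟩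

/-- The point of the right half of the dyadic interval at the given distance from the midpoint. -/
def right (r : DyadicIndex N k) : Fin N :=
  ⟨r.1 + (2 ^ k + r.2), by have := r.1.2; have := r.2.2; omega⟩

theorem injective_lower_left : Injective fun r : DyadicIndex N k => (r.lower, r.left) := by
  rintro ⟨j, a⟩ ⟨j', a'⟩ h
  simp only [lower, left, Prod.mk.injEq, Fin.mk.injEq] at h
  have := a.2
  have := a'.2
  rw [Prod.mk.injEq, Fin.ext_iff, Fin.ext_iff]
  omega

theorem injective_upper_right : Injective fun r : DyadicIndex N k => (r.upper, r.right) := by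
  rintro ⟨j, a⟩ ⟨j', a'⟩ h
  simp only [upper, right, Prod.mk.injEq, Fin.mk.injEq] at h
  rw [Prod.mk.injEq, Fin.ext_iff, Fin.ext_iff]
  omega

theorem injective_upper_left :
    Injective fun r : Σ k : Fin n, DyadicIndex N k => (r.2.upper, r.2.left) := by
  rintro ⟨k, j, a⟩ ⟨k', j', a'⟩ h
  simp only [upper, left, Prod.mk.injEq, Fin.mk.injEq] at h
  obtain ⟨hk, ha⟩ := eq_and_eq_of_two_pow_add_eq a.2 a'.2 (by omega)
  obtain rfl : k = k' := Fin.ext hk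
  obtain rfl : a = a' := Fin.ext ha
  obtain rfl : j = j' := Fin.ext (by omega)
  rfl

theorem injective_lower_right :
    Injective fun r : Σ k : Fin n, DyadicIndex N k => (r.2.lower, r.2.right) := by
  rintro ⟨k, j, a⟩ ⟨k', j', a'⟩ h
  simp only [lower, right, Prod.mk.injEq, Fin.mk.injEq] at h
  obtain ⟨hk, ha⟩ := eq_and_eq_of_two_pow_add_eq a.2 a'.2 (by omega)
  obtain rfl : k = k' := Fin.ext hk
  obtain rfl : a = a' := Fin.ext ha
  obtain rfl : j = j' := Fin.ext h.1
  rfl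

end DyadicIndex

theorem hasColumnRowDecomposition_sum_inner {H : Type*} [NormedAddCommGroup H]
    [InnerProductSpace ℂ H] [FiniteDimensional ℂ H] {n N : ℕ} {E : ℕ → Submodule ℂ H}
    (hE : Monotone E) {X : ℕ → S → H} {Y : ℕ → T → H} {C : ℝ}
    (hXE : ∀ i s, X i s ∈ E i) (hYE : ∀ j < N, ∀ t, Y j t ∈ (E j)ᗮ)
    (hX : ∀ i s, ‖X i s‖ ^ 2 ≤ C) (hY : ∀ j t, ‖Y j t‖ ^ 2 ≤ C) :
    HasColumnRowDecomposition (fun (k : Fin n) p =>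
      ∑ j : Fin (N - 2 ^ (k + 1 : ℕ)), inner ℂ (X (j + 2 ^ (k + 1 : ℕ)) p.1) (Y j p.2))
      (N * C) := by
  let x (q : Fin N × Fin N) (s : S) : H := projDiff E q.2 (X q.1 s)
  let y (q : Fin N × Fin N) (t : T) : H := projDiff E q.2 (Y q.1 t)
  have hx : ∀ s, ∑ q, ‖x q s‖ ^ 2 ≤ N * C := fun s =>
    sum_norm_projDiff_sq_le_mul hE (v := fun i : Fin N => X i s) fun i => hX i s
  have hy : ∀ t, ∑ q, ‖y q t‖ ^ 2 ≤ N * C := fun t =>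
    sum_norm_projDiff_sq_le_mul hE (v := fun j : Fin N => Y j t) fun j => hY j t
  have hleft := HasColumnFactorization.sum_inner (x := x) (y := y) hx hy
    (a := fun (k : Fin n) (r : DyadicIndex N k) => (r.upper, r.left))
    (b := fun k r => (r.lower, r.left))
    DyadicIndex.injective_upper_left fun _ => DyadicIndex.injective_lower_left
  have hright := HasRowFactorization.sum_inner (x := x) (y := y) hx hy
    (a := fun (k : Fin n) (r : DyadicIndex N k) => (r.upper, r.right))
    (b := fun k r => (r.lower, r.right))
    (fun _ => DyadicIndex.injective_upper_right) DyadicIndex.injective_lower_right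
  refine ⟨_, _, fun k p => ?_, hleft, hright⟩
  rw [Fintype.sum_prod_type, Fintype.sum_prod_type, ← sum_add_distrib]
  refine sum_congr rfl fun j _ => ?_
  have hj : (j : ℕ) < N := j.2.trans_le (Nat.sub_le _ _)
  rw [inner_eq_sum_Ico_projDiff hE (Nat.le_add_right _ _) (hXE _ _) (hYE j hj _),
    sum_Ico_two_pow_succ]
  rfl

theorem hasColumnRowDecomposition_sum_inner_of_triangular {H : Type*} [NormedAddCommGroup H]
    [InnerProductSpace ℂ H] [FiniteDimensional ℂ H] {n N : ℕ} {X : ℕ → S → H} {Y : ℕ → T → H}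
    {C : ℝ} (hXY : ∀ j < N, ∀ i ≤ j, ∀ s t, inner ℂ (X i s) (Y j t) = 0)
    (hX : ∀ i s, ‖X i s‖ ^ 2 ≤ C) (hY : ∀ j t, ‖Y j t‖ ^ 2 ≤ C) :
    HasColumnRowDecomposition (fun (k : Fin n) p =>
      ∑ j : Fin (N - 2 ^ (k + 1 : ℕ)), inner ℂ (X (j + 2 ^ (k + 1 : ℕ)) p.1) (Y j p.2))
      (N * C) := by
  let E (l : ℕ) : Submodule ℂ H := Submodule.span ℂ {v | ∃ i ≤ l, ∃ s, X i s = v}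
  have hE : Monotone E := fun l l' hl =>
    Submodule.span_mono fun v ⟨i, hi, hv⟩ => ⟨i, hi.trans hl, hv⟩
  have hXE : ∀ i s, X i s ∈ E i := fun i s => Submodule.subset_span ⟨i, le_rfl, s, rfl⟩
  have hYE : ∀ j < N, ∀ t, Y j t ∈ (E j)ᗮ := by
    intro j hj t
    have hortho : E j ⟂ ℂ ∙ Y j t := by
      rw [Submodule.isOrtho_span]
      rintro _ ⟨i, hi, s, rfl⟩ _ rfl
      exact hXY j hj i hi s t
    exact hortho.symm (Submodule.mem_span_singleton_self _)
  exact hasColumnRowDecomposition_sum_inner hE hXE hYE hX hY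

theorem hasColumnRowDecomposition_of_inner_eq_sum_ite {H : Type*} [NormedAddCommGroup H]
    [InnerProductSpace ℂ H] [FiniteDimensional ℂ H] {n N : ℕ} {φ : Fin n → S × T → ℂ}
    {X : ℕ → S → H} {Y : ℕ → T → H} {C : ℝ} (hN : 2 ^ n < N)
    (hXY : ∀ i < N, ∀ j < N, ∀ s t, inner ℂ (X i s) (Y j t) =
      ∑ k : Fin n, if i = j + 2 ^ (k + 1 : ℕ) then φ k (s, t) else 0)
    (hX : ∀ i s, ‖X i s‖ ^ 2 ≤ C) (hY : ∀ j t, ‖Y j t‖ ^ 2 ≤ C) :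
    HasColumnRowDecomposition φ ((N - 2 ^ n : ℝ)⁻¹ * (N * C)) := by
  have hle : ∀ k : Fin n, 2 ^ (k + 1 : ℕ) ≤ 2 ^ n := fun k =>
    Nat.pow_le_pow_right two_pos k.2
  have hsum : ∀ (k : Fin n) s t, ∑ j : Fin (N - 2 ^ (k + 1 : ℕ)),
      inner ℂ (X (j + 2 ^ (k + 1 : ℕ)) s) (Y j t) = (N - 2 ^ (k + 1 : ℕ) : ℂ) * φ k (s, t) := by
    intro k s t
    have hterm : ∀ j : Fin (N - 2 ^ (k + 1 : ℕ)),
        inner ℂ (X (j + 2 ^ (k + 1 : ℕ)) s) (Y j t) = φ k (s, t) := fun j => by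
      have hj := j.2
      rw [hXY _ (Nat.add_lt_of_lt_sub hj) _ (hj.trans_le (Nat.sub_le _ _))]
      simp [Fin.val_inj]
    rw [sum_congr rfl fun j _ => hterm j]
    simp [Nat.cast_sub ((hle k).trans hN.le)]
  have hgap : (0 : ℝ) < N - 2 ^ n := sub_pos.2 (by exact_mod_cast hN)
  have hgap' : ∀ k : Fin n, (N - 2 ^ n : ℝ) ≤ N - 2 ^ (k + 1 : ℕ) := fun k =>
    sub_le_sub_left (by exact_mod_cast hle k) _
  have ha : ∀ k : Fin n, ‖(((N - 2 ^ (k + 1 : ℕ) : ℝ)⁻¹ : ℝ) : ℂ)‖ ≤ (N - 2 ^ n : ℝ)⁻¹ := by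
    intro k
    rw [Complex.norm_of_nonneg (inv_nonneg.2 (hgap.le.trans (hgap' k)))]
    exact inv_anti₀ hgap (hgap' k)
  have htri : ∀ j < N, ∀ i ≤ j, ∀ s t, inner ℂ (X i s) (Y j t) = 0 := fun j hj i hi s t => by
    rw [hXY i (hi.trans_lt hj) j hj]
    exact sum_eq_zero fun k _ => if_neg (by have := Nat.two_pow_pos (k + 1); omega)
  convert (hasColumnRowDecomposition_sum_inner_of_triangular htri hX hY).mul ha (inv_pos.2 hgap)
    using 3 with k p
  have hne : (N - 2 ^ (k + 1 : ℕ) : ℂ) ≠ 0 := by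
    exact_mod_cast (hgap.trans_le (hgap' k)).ne'
  rw [hsum]
  push_cast
  rw [inv_mul_cancel_left₀ hne]

theorem exists_sum_mul_left_le_integral {G κ : Type*} [Group G] [MeasurableSpace G]
    [MeasurableMul G] [Fintype κ] {μ : Measure G} [μ.IsMulLeftInvariant] [IsProbabilityMeasure μ]
    {f : G → ℝ} (hf : Integrable f μ) (g : κ → G) :
    ∃ ω, ∑ r, f (g r * ω) ≤ Fintype.card κ * ∫ z, f z ∂μ := by
  have hint : ∫ z, ∑ r, f (g r * z) ∂μ = Fintype.card κ * ∫ z, f z ∂μ := by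
    rw [integral_finsetSum _ fun r _ => hf.comp_mul_left (g r)]
    simp [integral_mul_left_eq_self]
  rw [← hint]
  exact exists_le_integral (integrable_finsetSum _ fun r _ => hf.comp_mul_left (g r))

theorem sum_conj_toCircle_mul_toCircle (R : ℕ) [NeZero R] (i j : ZMod R) :
    ∑ r : ZMod R, conj (ZMod.toCircle (r * i) : ℂ) * ZMod.toCircle (r * j) =
      if i = j then (R : ℂ) else 0 := by
  have h := AddChar.sum_mulShift (j - i) (ZMod.isPrimitive_stdAddChar R)
  simp only [sub_eq_zero, ZMod.card, @eq_comm _ j] at h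
  push_cast at h
  rw [← h]
  refine sum_congr rfl fun r _ => ?_
  rw [mul_sub, sub_eq_add_neg, add_comm, AddChar.map_add_eq_mul, AddChar.map_neg_eq_conj]
  rfl

theorem HasFactorization.exists_dilation {ι : Type*} [Fintype ι] {R : ℕ} [NeZero R]
    {φ : ι → S × T → ℂ} {e : ι → ZMod R} {w : ZMod R → ℝ}
    (h : ∀ r, HasFactorization (fun p => ∑ k, (ZMod.toCircle (r * e k) : ℂ) * φ k p) (w r)) :
    ∃ (d : ℕ) (X : ZMod R → S → EuclideanSpace ℂ (Fin d))
      (Y : ZMod R → T → EuclideanSpace ℂ (Fin d)),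
      (∀ i j s t, inner ℂ (X i s) (Y j t) = ∑ k, if i = j + e k then R * φ k (s, t) else 0) ∧
        (∀ i s, ‖X i s‖ ^ 2 ≤ ∑ r, w r) ∧ ∀ j t, ‖Y j t‖ ^ 2 ≤ ∑ r, w r := by
  obtain ⟨d, X, Y, hXY, hX, hY⟩ := exists_directSum h
  let u (i r : ZMod R) : ℂ := ZMod.toCircle (r * i)
  have hu : ∀ i, ∑ r, ‖u i r‖ ^ 2 * w r = ∑ r, w r := fun i => by
    simp only [u, Circle.norm_coe, one_pow, one_mul]
  refine ⟨d, fun i => X (u i), fun j => Y (u j), fun i j s t => ?_,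
    fun i s => (hX _ s).trans_eq (hu i), fun j t => (hY _ t).trans_eq (hu j)⟩
  calc inner ℂ (X (u i) s) (Y (u j) t)
      = ∑ k, (∑ r, conj (u i r) * u (j + e k) r) * φ k (s, t) := by
        simp only [hXY, mul_sum, sum_mul]
        rw [sum_comm]
        refine sum_congr rfl fun k _ => sum_congr rfl fun r _ => ?_
        simp only [u, mul_add, AddChar.map_add_eq_mul, Circle.coe_mul]
        ring
    _ = ∑ k, if i = j + e k then R * φ k (s, t) else 0 := by
        simp only [u, sum_conj_toCircle_mul_toCircle, ite_mul, zero_mul]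

theorem hasColumnRowDecomposition_of_hasFactorization_toCircle {n N : ℕ} [NeZero N]
    {φ : Fin n → S × T → ℂ} {w : ZMod (2 * N) → ℝ} (hN : 2 ^ n < N)
    (h : ∀ r, HasFactorization (fun p => ∑ k : Fin n,
      (ZMod.toCircle (r * 2 ^ (k + 1 : ℕ)) : ℂ) * φ k p) (w r)) :
    HasColumnRowDecomposition φ ((2 * (N - 2 ^ n : ℝ))⁻¹ * ∑ r, w r) := by
  obtain ⟨d, X, Y, hXY, hX, hY⟩ := HasFactorization.exists_dilation h
  -- No wrap-around: all indices and lags below are less than the modulus `2 * N`.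
  have hcast : ∀ i < N, ∀ j < N, ∀ k : Fin n,
      (i : ZMod (2 * N)) = j + 2 ^ (k + 1 : ℕ) ↔ i = j + 2 ^ (k + 1 : ℕ) := by
    intro i hi j hj k
    have hk : 2 ^ (k + 1 : ℕ) ≤ 2 ^ n := Nat.pow_le_pow_right two_pos k.2
    have hinj := CharP.natCast_injOn_Iio (ZMod (2 * N)) (2 * N)
    exact_mod_cast hinj.eq_iff (x := i) (y := j + 2 ^ (k + 1 : ℕ)) (Set.mem_Iio.2 (by omega))
      (Set.mem_Iio.2 (by omega))
  have hdec := hasColumnRowDecomposition_of_inner_eq_sum_ite (φ := fun k p => (2 * N : ℕ) * φ k p)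
    (X := fun i => X i) (Y := fun j => Y j) hN
    (fun i hi j hj s t => by simp only [hXY, hcast i hi j hj]) (fun i => hX i) fun j => hY j
  have hN0 : (N : ℝ) ≠ 0 := NeZero.ne _
  have hinv : 0 < (2 * N : ℝ)⁻¹ := by positivity
  convert hdec.mul (a := fun _ => ((2 * N : ℝ)⁻¹ : ℝ)) (r := (2 * N : ℝ)⁻¹)
    (fun _ => (Complex.norm_of_nonneg hinv.le).le) hinv using 1
  · ext k p
    have : (N : ℂ) ≠ 0 := NeZero.ne _
    push_cast
    field_simp
  · field_simp

theorem hasColumnRowDecomposition_of_sum_gamma2_lt [Finite S] [Finite T] {n N : ℕ} [NeZero N]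
    {φ : Fin n → S × T → ℂ} {C : ℝ} (hN : 2 ^ n < N)
    (h : ∑ r : ZMod (2 * N), gamma2 (fun p => ∑ k : Fin n,
      (ZMod.toCircle (r * 2 ^ (k + 1 : ℕ)) : ℂ) * φ k p) < 2 * (N - 2 ^ n) * C) :
    HasColumnRowDecomposition φ C := by
  set g : ZMod (2 * N) → ℝ := fun r => gamma2 fun p => ∑ k : Fin n,
    (ZMod.toCircle (r * 2 ^ (k + 1 : ℕ)) : ℂ) * φ k p
  have hN0 : (N : ℝ) ≠ 0 := NeZero.ne _
  have hgap : (N - 2 ^ n : ℝ) ≠ 0 := (sub_pos.2 (by exact_mod_cast hN)).ne'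
  let slack : ℝ := (2 * (N - 2 ^ n) * C - ∑ r, g r) / (2 * N)
  have hslack : 0 < slack := div_pos (sub_pos.2 h) (by positivity)
  have hw : ∑ r, (g r + slack) = 2 * (N - 2 ^ n) * C := by
    simp only [sum_add_distrib, sum_const, card_univ, ZMod.card, nsmul_eq_mul, slack]
    push_cast
    rw [mul_div_cancel₀ _ (by positivity), add_sub_cancel]
  have hdec := hasColumnRowDecomposition_of_hasFactorization_toCircle hN
    fun r => hasFactorization_of_gamma2_lt (lt_add_of_pos_right (g r) hslack)
  rwa [hw, inv_mul_cancel_left₀ (by positivity)] at hdec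

theorem hasColumnRowDecomposition_of_integral_gamma2_lt [Finite S] [Finite T]
    [MeasurableSpace Circle] [BorelSpace Circle] {n : ℕ} {μ : Measure (Fin n → Circle)}
    [μ.IsMulLeftInvariant] [IsProbabilityMeasure μ] {ψ : Fin n → S × T → ℂ} {C : ℝ}
    (h : ∫ z, gamma2 (fun p => ∑ k, (z k : ℂ) * ψ k p) ∂μ < C) :
    HasColumnRowDecomposition ψ C := by
  let f (z : Fin n → Circle) : ℝ := gamma2 fun p => ∑ k, (z k : ℂ) * ψ k p
  have hf : Continuous f := continuous_gamma2.comp (by fun_prop)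
  have hf0 : 0 ≤ ∫ z, f z ∂μ := integral_nonneg fun _ => gamma2_nonneg _
  obtain ⟨N, hN⟩ := exists_nat_gt (2 ^ n * C / (C - ∫ z, f z ∂μ))
  rw [div_lt_iff₀ (sub_pos.2 h), mul_sub] at hN
  have hnN : 2 ^ n < N := by
    have hC : 2 ^ n * C < N * C := hN.trans_le (sub_le_self _ (by positivity))
    exact_mod_cast lt_of_mul_lt_mul_right hC (hf0.trans h.le)
  have : NeZero N := ⟨hnN.pos.ne'⟩
  obtain ⟨ω, hω⟩ := exists_sum_mul_left_le_integral (μ := μ)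
    (hf.integrable_of_hasCompactSupport (.of_compactSpace f))
    fun (r : ZMod (2 * N)) k => ZMod.toCircle (r * 2 ^ (k + 1 : ℕ))
  have hdec : HasColumnRowDecomposition (fun k p => (ω k : ℂ) * ψ k p) C := by
    refine hasColumnRowDecomposition_of_sum_gamma2_lt hnN ?_
    simp only [f, ZMod.card, Pi.mul_apply, Circle.coe_mul, mul_assoc] at hω
    push_cast at hω
    linarith
  simpa only [← mul_assoc, ← Circle.coe_mul, ← Circle.coe_inv, inv_mul_cancel, Circle.coe_one,
    one_mul] using hdec.mul (a := fun k => ((ω k)⁻¹ : Circle)) (r := 1)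
      (fun k => (Circle.norm_coe _).le) one_pos

end Transference

/-- Theorem 2.2 (i): if `∫_{𝕋^n} γ₂(Σ_k z_k ψ_k) dμ(z) < 1` then the `ψ_k`
decompose as `ψ_k = A_k + B_k` where `(A_k)` factors with column-square bound 1 and
`(B_k)` factors with row-square bound 1. -/
theorem stmt_12 {S T : Type*} [Fintype S] [Fintype T] [Nonempty S] [Nonempty T]
    [MeasurableSpace Circle] [BorelSpace Circle]
    (m : Measure Circle) [m.IsHaarMeasure] [IsProbabilityMeasure m]
    (n : ℕ) (ψ : Fin n → S × T → ℂ)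
    (h : (∫ z : Fin n → Circle, gamma2 (fun p => ∑ k, (z k : ℂ) * ψ k p)
        ∂(Measure.pi fun _ : Fin n => m)) < 1) :
    ∃ A B : Fin n → S × T → ℂ,
      (∀ k p, ψ k p = A k p + B k p) ∧
      (∃ (d : ℕ) (α : Fin n → S → EuclideanSpace ℂ (Fin d))
          (β : T → EuclideanSpace ℂ (Fin d)),
        (∀ k s t, A k (s, t) = inner (𝕜 := ℂ) (α k s) (β t)) ∧
        (∀ s, ∑ k, ‖α k s‖ ^ 2 ≤ 1) ∧ (∀ t, ‖β t‖ ≤ 1)) ∧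
      (∃ (d' : ℕ) (γ : S → EuclideanSpace ℂ (Fin d'))
          (δ : Fin n → T → EuclideanSpace ℂ (Fin d')),
        (∀ k s t, B k (s, t) = inner (𝕜 := ℂ) (γ s) (δ k t)) ∧
        (∀ s, ‖γ s‖ ≤ 1) ∧ (∀ t, ∑ k, ‖δ k t‖ ^ 2 ≤ 1)) := by
  obtain ⟨A, B, hψ, ⟨d, α, β, hA, hα, hβ⟩, d', δ, γ, hB, hδ, hγ⟩ :=
    hasColumnRowDecomposition_of_integral_gamma2_lt h
  refine ⟨A, B, hψ, ⟨d, α, β, hA, hα, fun t => (sq_le_one_iff₀ (norm_nonneg _)).1 (hβ t)⟩,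
    d', γ, δ, fun k s t => ?_, fun s => (sq_le_one_iff₀ (norm_nonneg _)).1 (hγ s), hδ⟩
  rw [← inner_conj_symm, ← hB k t s, Complex.conj_conj, Prod.swap_prod_mk]
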